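/- There is C > 0 such that for every integer n ≥ 1 and every x ∈ [−2·n^{2/3}, ∞): |ψ_n(x)| ≤ C·max(|x|,1)^{−1/4}, |ψ_n'(x)| ≤ C·max(|x|,1)^{1/4}, and |ψ_n''(x)| ≤ C·max(|x|,1)^{3/4}. -/

import Mathlib

open MeasureTheory Filter Set

noncomputable section

/-- The Airy function `Ai(x) = (1/π)·lim_{b→∞} ∫_0^b cos(t³/3 + x·t) dt`. -/
def Ai (x : ℝ) : ℝ :=
  (1 / Real.pi) *
    limUnder Filter.atTop (fun b : ℝ => ∫ t in (0:ℝ)..b, Real.cos (t ^ 3 / 3 + x * t))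

/-- The Airy kernel. -/
def KAi (x y : ℝ) : ℝ :=
  if x = y then (deriv Ai x) ^ 2 - x * (Ai x) ^ 2
  else (Ai x * deriv Ai y - deriv Ai x * Ai y) / (x - y)

/-- One-point correlation function of the Airy₂ random point field. -/
def rho (x : ℝ) : ℝ := (deriv Ai x) ^ 2 - x * (Ai x) ^ 2

/-- Probabilists' Hermite polynomial `Ĥ_m(x) = (−1)^m e^{x²/2} (d/dx)^m e^{−x²/2}`. -/
def hermiteP (m : ℕ) (x : ℝ) : ℝ :=
  (-1 : ℝ) ^ m * Real.exp (x ^ 2 / 2) * iteratedDeriv m (fun t => Real.exp (-t ^ 2 / 2)) x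

/-- Normalized oscillator function `φ_m`. -/
def osc (m : ℕ) (x : ℝ) : ℝ :=
  (2 * Real.pi) ^ (-(1:ℝ)/4) * ((m.factorial : ℝ)) ^ (-(1:ℝ)/2) *
    Real.exp (-x ^ 2 / 4) * hermiteP m x

/-- `ψ_mⁿ(x) = n^{1/12}·φ_m(2√n + n^{−1/6}·x)`. -/
def psiUp (n m : ℕ) (x : ℝ) : ℝ :=
  (n : ℝ) ^ ((1:ℝ)/12) * osc m (2 * Real.sqrt n + (n : ℝ) ^ (-(1:ℝ)/6) * x)

/-- `ψ_n = ψ_nⁿ`. -/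
def psiN (n : ℕ) : ℝ → ℝ := psiUp n n

/-- The finite-`n` Airy kernel. -/
def KAiN (n : ℕ) (x y : ℝ) : ℝ :=
  if x = y then
    (deriv (psiN n) x) ^ 2 - psiN n x * deriv (deriv (psiN n)) x
      - (1 / (2 * (n : ℝ) ^ ((1:ℝ)/3))) * (psiN n x) ^ 2
  else
    (psiN n x * deriv (psiN n) y - deriv (psiN n) x * psiN n y) / (x - y)
      - (1 / (2 * (n : ℝ) ^ ((1:ℝ)/3))) * (psiN n x * psiN n y)

/-- `(εf)(x) = (1/2)·∫_ℝ sign(x − y)·f(y) dy`. -/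
def epsF (f : ℝ → ℝ) (x : ℝ) : ℝ := (1/2) * ∫ y : ℝ, Real.sign (x - y) * f y

/-- `εψ_n`. -/
def epsPsi (n : ℕ) : ℝ → ℝ := epsF (psiN n)

/-- `J₁(x,y) = K_Ai(x,y) + (1/2)·Ai(x)·(1 − ∫_y^∞ Ai(u) du)`. -/
def J1 (x y : ℝ) : ℝ := KAi x y + (1/2) * Ai x * (1 - ∫ u in Set.Ioi y, Ai u)

/-- Scalar part of the quaternion product of Airy₁ kernels. -/
def L1 (x y : ℝ) : ℝ :=
  J1 x y * J1 y x -
    deriv (fun v => J1 x v) y * ((∫ u in x..y, J1 u x) - (1/2) * Real.sign (y - x))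

/-- `J₁ⁿ(x,y) = K_Aiⁿ(x,y) + (1/2)·ψ_{n−1}ⁿ(x)·(εψ_n)(y)`. -/
def J1N (n : ℕ) (x y : ℝ) : ℝ :=
  KAiN n x y + (1/2) * psiUp n (n - 1) x * epsPsi n y

/-- Scalar part of the quaternion product of finite-`n` Airy₁ kernels. -/
def L1N (n : ℕ) (x y : ℝ) : ℝ :=
  J1N n x y * J1N n y x -
    deriv (fun v => J1N n x v) y * ((∫ u in x..y, J1N n u x) - (1/2) * Real.sign (y - x))

/-- `ρ̂(x) = (1/π)·√(−x)` for `x < 0`, and `0` otherwise. -/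
def rhoHat (x : ℝ) : ℝ := if x < 0 then Real.sqrt (-x) / Real.pi else 0

/-- `ρ̂ⁿ(x) = (1/π)·√(−x·(1 + x/(4·n^{2/3})))` on `(−4n^{2/3}, 0)`, and `0` otherwise. -/
def rhoHatN (n : ℕ) (x : ℝ) : ℝ :=
  if -(4 * (n : ℝ) ^ ((2:ℝ)/3)) < x ∧ x < 0 then
    Real.sqrt (-x * (1 + x / (4 * (n : ℝ) ^ ((2:ℝ)/3)))) / Real.pi
  else 0

/-- `G_{a,b,c}(x,y) = |x|^{−a}·|y|^{−b}·|x−y|^{−c}`. -/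
def Gf (a b c : ℝ) (x y : ℝ) : ℝ := |x| ^ (-a) * |y| ^ (-b) * |x - y| ^ (-c)

/-- `Ĝ_{a,b,c}(x,y) = G_{a,b,c}(x,y) + G_{a,b,c}(y,x)`. -/
def Ghat (a b c : ℝ) (x y : ℝ) : ℝ := Gf a b c x y + Gf a b c y x

/-- Soft-edge one-point correlation function of the `n`-point GUE ensemble. -/
def rhoN (n : ℕ) (x : ℝ) : ℝ :=
  (deriv (psiN n) x) ^ 2 - (x ^ 2 / (4 * (n : ℝ) ^ ((2:ℝ)/3)) + x) * (psiN n x) ^ 2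

end

/-!
In the edge scaling `ψ_n` solves `u'' = q u` with `q x = x + s² x² / 4 - s / 2`, where
`s = n^{-1/3} ∈ (0, 1]`, and the left end `-2 n^{2/3}` of the range corresponds to the centre of
symmetry of `φ_n`, where `φ_n` and `φ_n'` are explicit by the Hermite recursion. These initial data
have WKB energy `√(-q) u² + u'² / √(-q)` bounded uniformly in `n`. On `[-2 n^{2/3}, -2]`, adding the
adiabatic correction `γ u u'` with `γ = (-q)' / (2 (-q)^{3/2})` turns the derivative of the energy
into `γ' u u'`; concavity of `-q` makes `γ` monotone, and `|γ| ≤ 1`, so the energy grows by at most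
a constant factor. Grönwall's inequality carries it across the turning region `[-2, 2]`. For `x ≥ 2`
a solution vanishing at infinity has `u u' ≤ 0`, hence decays exponentially since `q ≥ 1`.
-/

lemma antitoneOn_of_hasDerivAt_nonpos {f f' : ℝ → ℝ} {s : Set ℝ} (hs : Convex ℝ s)
    (hf : ∀ x ∈ s, HasDerivAt f (f' x) x) (hf' : ∀ x ∈ s, f' x ≤ 0) : AntitoneOn f s :=
  antitoneOn_of_hasDerivWithinAt_nonpos hs (fun x hx => (hf x hx).continuousAt.continuousWithinAt)
    (fun x hx => (hf x (interior_subset hx)).hasDerivWithinAt)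
    (fun x hx => hf' x (interior_subset hx))

lemma nonneg_of_hasDerivAt_nonpos_of_tendsto_zero {f f' : ℝ → ℝ} {a x : ℝ}
    (hf : ∀ y ∈ Ici a, HasDerivAt f (f' y) y) (hf' : ∀ y ∈ Ici a, f' y ≤ 0)
    (hlim : Tendsto f atTop (nhds 0)) (hx : x ∈ Ici a) : 0 ≤ f x := by
  have hanti := antitoneOn_of_hasDerivAt_nonpos (convex_Ici a) hf hf'
  refine le_of_tendsto hlim ?_
  filter_upwards [eventually_ge_atTop x] with y hxy
  exact hanti hx (mem_Ici.mp hx |>.trans hxy) hxy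

/-! ### The equation `u'' = q u` -/

/-- The one-dimensional Schrödinger equation `u'' = q u` at every point of `s`, with two-sided
derivatives also at boundary points of `s`. -/
structure IsSchrodingerSolutionOn (q u : ℝ → ℝ) (s : Set ℝ) : Prop where
  differentiableAt : ∀ x ∈ s, DifferentiableAt ℝ u x
  hasDerivAt_deriv : ∀ x ∈ s, HasDerivAt (deriv u) (q x * u x) x

namespace IsSchrodingerSolutionOn

variable {q u : ℝ → ℝ} {s t : Set ℝ} {a b x κ K : ℝ}

lemma mono (h : IsSchrodingerSolutionOn q u t) (hst : s ⊆ t) : IsSchrodingerSolutionOn q u s :=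
  ⟨fun x hx => h.differentiableAt x (hst hx), fun x hx => h.hasDerivAt_deriv x (hst hx)⟩

lemma hasDerivAt (h : IsSchrodingerSolutionOn q u s) (hx : x ∈ s) : HasDerivAt u (deriv u x) x :=
  (h.differentiableAt x hx).hasDerivAt

lemma deriv_deriv (h : IsSchrodingerSolutionOn q u s) (hx : x ∈ s) :
    deriv (deriv u) x = q x * u x :=
  (h.hasDerivAt_deriv x hx).deriv

theorem sq_add_sq_le (h : IsSchrodingerSolutionOn q u (Icc a b))
    (hq : ∀ y ∈ Icc a b, |1 + q y| ≤ K) (hx : x ∈ Icc a b) :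
    u x ^ 2 + deriv u x ^ 2 ≤ (u a ^ 2 + deriv u a ^ 2) * Real.exp (K * (x - a)) := by
  have energy_nonneg (y : ℝ) : 0 ≤ u y ^ 2 + deriv u y ^ 2 := by positivity
  have energy_deriv : ∀ y ∈ Icc a b, HasDerivAt (fun y => u y ^ 2 + deriv u y ^ 2)
      ((1 + q y) * (2 * u y * deriv u y)) y := fun y hy => by
    refine (((h.hasDerivAt hy).pow 2).add ((h.hasDerivAt_deriv y hy).pow 2)).congr_deriv ?_
    ring
  have energy_growth : ∀ y ∈ Icc a b,
      ‖(1 + q y) * (2 * u y * deriv u y)‖ ≤ K * ‖u y ^ 2 + deriv u y ^ 2‖ := fun y hy => by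
    have two_mul_le : |2 * u y * deriv u y| ≤ u y ^ 2 + deriv u y ^ 2 :=
      abs_le.mpr ⟨by nlinarith [sq_nonneg (u y + deriv u y)], two_mul_le_add_sq _ _⟩
    rw [Real.norm_eq_abs, Real.norm_eq_abs, abs_mul, abs_of_nonneg (energy_nonneg y)]
    exact mul_le_mul (hq y hy) two_mul_le (abs_nonneg _) ((abs_nonneg _).trans (hq y hy))
  have gronwall := norm_le_gronwallBound_of_norm_deriv_right_le (ε := 0)
    (fun y hy => (energy_deriv y hy).continuousAt.continuousWithinAt)
    (fun y hy => (energy_deriv y (Ico_subset_Icc_self hy)).hasDerivWithinAt) le_rfl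
    (fun y hy => by simpa using energy_growth y (Ico_subset_Icc_self hy)) x hx
  simpa only [gronwallBound_ε0, Real.norm_eq_abs, abs_of_nonneg (energy_nonneg _)] using gronwall

/-! ### Decay in the forbidden region -/

section Decay

variable (h : IsSchrodingerSolutionOn q u (Ici a)) (hlim : Tendsto u atTop (nhds 0))
  (hlim' : Tendsto (deriv u) atTop (nhds 0))

include h hlim hlim'

lemma mul_deriv_nonpos (hq : ∀ y ∈ Ici a, 0 ≤ q y) (hx : x ∈ Ici a) : u x * deriv u x ≤ 0 := by
  have product_deriv : ∀ y ∈ Ici a, HasDerivAt (fun y => -(u y * deriv u y))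
      (-(deriv u y ^ 2 + q y * u y ^ 2)) y := fun y hy => by
    refine ((h.hasDerivAt hy).mul (h.hasDerivAt_deriv y hy)).neg.congr_deriv ?_
    ring
  have product_lim : Tendsto (fun y => -(u y * deriv u y)) atTop (nhds 0) := by
    simpa using (hlim.mul hlim').neg
  have product_deriv_nonpos : ∀ y ∈ Ici a, -(deriv u y ^ 2 + q y * u y ^ 2) ≤ 0 := fun y hy => by
    have := hq y hy
    exact neg_nonpos.mpr (by positivity)
  exact neg_nonneg.mp (nonneg_of_hasDerivAt_nonpos_of_tendsto_zero
    (f := fun y => -(u y * deriv u y)) product_deriv product_deriv_nonpos product_lim hx)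

lemma antitoneOn_deriv_sq (hq : ∀ y ∈ Ici a, 0 ≤ q y) :
    AntitoneOn (fun y => deriv u y ^ 2) (Ici a) := by
  refine antitoneOn_of_hasDerivAt_nonpos (f' := fun y => 2 * q y * (u y * deriv u y))
    (convex_Ici a) (fun y hy => ?_) fun y hy => ?_
  · refine ((h.hasDerivAt_deriv y hy).pow 2).congr_deriv ?_
    ring
  · exact mul_nonpos_of_nonneg_of_nonpos (mul_nonneg zero_le_two (hq y hy))
      (h.mul_deriv_nonpos hlim hlim' hq hy)

lemma sq_mul_sq_le_deriv_sq (hq : ∀ y ∈ Ici a, κ ^ 2 ≤ q y) (hx : x ∈ Ici a) :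
    κ ^ 2 * u x ^ 2 ≤ deriv u x ^ 2 := by
  have gap_deriv : ∀ y ∈ Ici a, HasDerivAt (fun y => deriv u y ^ 2 - κ ^ 2 * u y ^ 2)
      (2 * (q y - κ ^ 2) * (u y * deriv u y)) y := fun y hy => by
    refine (((h.hasDerivAt_deriv y hy).pow 2).sub
      (((h.hasDerivAt hy).pow 2).const_mul (κ ^ 2))).congr_deriv ?_
    ring
  have gap_lim : Tendsto (fun y => deriv u y ^ 2 - κ ^ 2 * u y ^ 2) atTop (nhds 0) := by
    simpa using (hlim'.pow 2).sub ((hlim.pow 2).const_mul (κ ^ 2))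
  have gap_deriv_nonpos : ∀ y ∈ Ici a, 2 * (q y - κ ^ 2) * (u y * deriv u y) ≤ 0 := fun y hy =>
    mul_nonpos_of_nonneg_of_nonpos (by linarith [hq y hy])
      (h.mul_deriv_nonpos hlim hlim' (fun z hz => (sq_nonneg κ).trans (hq z hz)) hy)
  exact sub_nonneg.mp (nonneg_of_hasDerivAt_nonpos_of_tendsto_zero
    (f := fun y => deriv u y ^ 2 - κ ^ 2 * u y ^ 2) gap_deriv gap_deriv_nonpos gap_lim hx)

lemma antitoneOn_exp_mul_sq (hκ : 0 ≤ κ) (hq : ∀ y ∈ Ici a, κ ^ 2 ≤ q y) :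
    AntitoneOn (fun y => Real.exp (2 * κ * y) * u y ^ 2) (Ici a) := by
  refine antitoneOn_of_hasDerivAt_nonpos
    (f' := fun y => Real.exp (2 * κ * y) * (2 * (κ * u y ^ 2 + u y * deriv u y)))
    (convex_Ici a) (fun y hy => ?_) fun y hy => ?_
  · refine (((hasDerivAt_id' y).const_mul (2 * κ)).exp.mul
      ((h.hasDerivAt hy).pow 2)).congr_deriv ?_
    simp only [Pi.pow_apply]
    ring
  · have product_nonpos := h.mul_deriv_nonpos hlim hlim'
      (fun z hz => (sq_nonneg κ).trans (hq z hz)) hy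
    have growth : κ * |u y| ≤ |deriv u y| := by
      have := sq_le_sq.mp (mul_pow κ (u y) 2 ▸ h.sq_mul_sq_le_deriv_sq hlim hlim' hq hy)
      rwa [abs_mul, abs_of_nonneg hκ] at this
    have sum_nonpos : κ * u y ^ 2 + u y * deriv u y ≤ 0 := calc
      κ * u y ^ 2 + u y * deriv u y = |u y| * (κ * |u y| - |deriv u y|) := by
        rw [mul_sub, ← abs_mul, abs_of_nonpos product_nonpos, mul_left_comm, abs_mul_abs_self]
        ring
      _ ≤ 0 := mul_nonpos_of_nonneg_of_nonpos (abs_nonneg _) (sub_nonpos.mpr growth)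
    exact mul_nonpos_of_nonneg_of_nonpos (Real.exp_pos _).le (by linarith)

theorem sq_le_exp_neg_mul_sq (hκ : 0 ≤ κ) (hq : ∀ y ∈ Ici a, κ ^ 2 ≤ q y) (hx : x ∈ Ici a) :
    u x ^ 2 ≤ Real.exp (-(2 * κ * (x - a))) * u a ^ 2 := by
  have weighted_le : Real.exp (2 * κ * x) * u x ^ 2 ≤ Real.exp (2 * κ * a) * u a ^ 2 :=
    h.antitoneOn_exp_mul_sq hlim hlim' hκ hq self_mem_Ici hx hx
  calc u x ^ 2 = Real.exp (-(2 * κ * x)) * (Real.exp (2 * κ * x) * u x ^ 2) := by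
        rw [← mul_assoc, ← Real.exp_add, neg_add_cancel, Real.exp_zero, one_mul]
    _ ≤ Real.exp (-(2 * κ * x)) * (Real.exp (2 * κ * a) * u a ^ 2) := by gcongr
    _ = Real.exp (-(2 * κ * (x - a))) * u a ^ 2 := by
        rw [← mul_assoc, ← Real.exp_add]; ring_nf

end Decay

end IsSchrodingerSolutionOn

/-! ### WKB estimates in the oscillatory region -/

/-- The WKB energy `√P u² + u'² / √P` of a solution of `u'' = -P u`: to leading order its square
root is the amplitude of `P^{1/4} u`. -/
noncomputable def wkbEnergy (P u : ℝ → ℝ) (x : ℝ) : ℝ :=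
  √(P x) * u x ^ 2 + deriv u x ^ 2 / √(P x)

/-- The adiabatic parameter `(√P)' / P = P' / (2 P^{3/2})`: the relative change of the frequency
`√P` per radian of phase. -/
noncomputable def adiabaticParam (P : ℝ → ℝ) (x : ℝ) : ℝ :=
  deriv P x / (2 * √(P x) ^ 3)

/-- The WKB energy with its first adiabatic correction, chosen so that the derivative involves
only the derivative of the adiabatic parameter. -/
noncomputable def adiabaticEnergy (P u : ℝ → ℝ) (x : ℝ) : ℝ :=
  wkbEnergy P u x + adiabaticParam P x * (u x * deriv u x)

/-- `P` is positive and concave on `s`, and varies slowly compared with its own frequency `√P`. -/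
structure IsAdiabaticOn (P : ℝ → ℝ) (s : Set ℝ) : Prop where
  pos : ∀ x ∈ s, 0 < P x
  differentiableAt : ∀ x ∈ s, DifferentiableAt ℝ P x
  differentiableAt_deriv : ∀ x ∈ s, DifferentiableAt ℝ (deriv P) x
  deriv_deriv_nonpos : ∀ x ∈ s, deriv (deriv P) x ≤ 0
  abs_adiabaticParam_le_one : ∀ x ∈ s, |adiabaticParam P x| ≤ 1

section WKB

variable {P u : ℝ → ℝ} {s : Set ℝ} {a b x : ℝ}

lemma abs_mul_deriv_le_wkbEnergy (hP : 0 < P x) : |u x * deriv u x| ≤ wkbEnergy P u x / 2 := by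
  have sub_sq : wkbEnergy P u x - 2 * (u x * deriv u x)
      = (√(P x) * u x - deriv u x) ^ 2 / √(P x) := by
    rw [wkbEnergy]; field_simp; ring
  have add_sq : wkbEnergy P u x + 2 * (u x * deriv u x)
      = (√(P x) * u x + deriv u x) ^ 2 / √(P x) := by
    rw [wkbEnergy]; field_simp; ring
  have sub_nonneg : 0 ≤ (√(P x) * u x - deriv u x) ^ 2 / √(P x) := by positivity
  have add_nonneg : 0 ≤ (√(P x) * u x + deriv u x) ^ 2 / √(P x) := by positivity
  exact abs_le.mpr ⟨by linarith, by linarith⟩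

lemma abs_adiabaticEnergy_sub_wkbEnergy_le (hP : 0 < P x) (hg : |adiabaticParam P x| ≤ 1) :
    |adiabaticEnergy P u x - wkbEnergy P u x| ≤ wkbEnergy P u x / 2 := by
  rw [adiabaticEnergy, add_sub_cancel_left, abs_mul]
  exact (mul_le_of_le_one_left (abs_nonneg _) hg).trans (abs_mul_deriv_le_wkbEnergy hP)

lemma hasDerivAt_adiabaticParam (hP : 0 < P x) (hP' : DifferentiableAt ℝ P x)
    (hP'' : DifferentiableAt ℝ (deriv P) x) :
    HasDerivAt (adiabaticParam P)
      (deriv (deriv P) x / (2 * √(P x) ^ 3) - 3 * deriv P x ^ 2 / (4 * √(P x) ^ 5)) x := by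
  refine (hP''.hasDerivAt.div (((hP'.hasDerivAt.sqrt hP.ne').pow 3).const_mul 2)
    (by simp only [Pi.pow_apply]; positivity)).congr_deriv ?_
  simp only [Pi.pow_apply]
  field_simp
  ring

lemma hasDerivAt_adiabaticEnergy (hP : 0 < P x) (hP' : DifferentiableAt ℝ P x)
    (hP'' : DifferentiableAt ℝ (deriv P) x) (hu : DifferentiableAt ℝ u x)
    (hu' : HasDerivAt (deriv u) (-P x * u x) x) :
    HasDerivAt (adiabaticEnergy P u) (deriv (adiabaticParam P) x * (u x * deriv u x)) x := by
  have hr : 0 < √(P x) := Real.sqrt_pos.mpr hP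
  have sqrt_deriv := hP'.hasDerivAt.sqrt hP.ne'
  have param_deriv :=
    (hasDerivAt_adiabaticParam hP hP' hP'').differentiableAt.hasDerivAt
  have energy_deriv := ((sqrt_deriv.mul (hu.hasDerivAt.pow 2)).add
    ((hu'.pow 2).div sqrt_deriv hr.ne')).add (param_deriv.mul (hu.hasDerivAt.mul hu'))
  refine energy_deriv.congr_deriv ?_
  rw [show -P x * u x = -√(P x) ^ 2 * u x by rw [Real.sq_sqrt hP.le]]
  simp only [adiabaticParam, Pi.pow_apply, Pi.mul_apply]
  field_simp
  ring

lemma IsAdiabaticOn.deriv_adiabaticParam_nonpos (hP : IsAdiabaticOn P s) (hx : x ∈ s) :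
    deriv (adiabaticParam P) x ≤ 0 := by
  rw [(hasDerivAt_adiabaticParam (hP.pos x hx) (hP.differentiableAt x hx)
    (hP.differentiableAt_deriv x hx)).deriv]
  exact sub_nonpos.mpr ((div_nonpos_of_nonpos_of_nonneg (hP.deriv_deriv_nonpos x hx)
    (by positivity)).trans (by positivity))

lemma IsAdiabaticOn.antitoneOn_exp_mul_adiabaticEnergy (hP : IsAdiabaticOn P s)
    (hs : Convex ℝ s) (hu : IsSchrodingerSolutionOn (-P) u s) :
    AntitoneOn (fun x => Real.exp (adiabaticParam P x) * adiabaticEnergy P u x) s := by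
  refine antitoneOn_of_hasDerivAt_nonpos (f' := fun x => Real.exp (adiabaticParam P x) *
    (deriv (adiabaticParam P) x * (adiabaticEnergy P u x + u x * deriv u x))) hs
    (fun x hx => ?_) fun x hx => ?_
  · have param_deriv := (hasDerivAt_adiabaticParam (hP.pos x hx) (hP.differentiableAt x hx)
      (hP.differentiableAt_deriv x hx)).differentiableAt.hasDerivAt
    refine (param_deriv.exp.mul (hasDerivAt_adiabaticEnergy (hP.pos x hx)
      (hP.differentiableAt x hx) (hP.differentiableAt_deriv x hx) (hu.differentiableAt x hx)
      (hu.hasDerivAt_deriv x hx))).congr_deriv ?_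
    ring
  · have correction := abs_le.mp (abs_adiabaticEnergy_sub_wkbEnergy_le (u := u) (hP.pos x hx)
      (hP.abs_adiabaticParam_le_one x hx))
    have product := abs_le.mp (abs_mul_deriv_le_wkbEnergy (u := u) (hP.pos x hx))
    exact mul_nonpos_of_nonneg_of_nonpos (Real.exp_pos _).le
      (mul_nonpos_of_nonpos_of_nonneg (hP.deriv_adiabaticParam_nonpos hx)
        (by linarith [correction.1, product.1]))

theorem IsAdiabaticOn.wkbEnergy_le (hP : IsAdiabaticOn P (Icc a b))
    (hu : IsSchrodingerSolutionOn (-P) u (Icc a b)) (hx : x ∈ Icc a b) :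
    wkbEnergy P u x ≤ 3 * Real.exp 2 * wkbEnergy P u a := by
  have ha : a ∈ Icc a b := left_mem_Icc.mpr (hx.1.trans hx.2)
  have energy_anti := hP.antitoneOn_exp_mul_adiabaticEnergy (convex_Icc a b) hu ha hx hx.1
  have correction_a := abs_le.mp (abs_adiabaticEnergy_sub_wkbEnergy_le (u := u) (hP.pos a ha)
    (hP.abs_adiabaticParam_le_one a ha))
  have correction_x := abs_le.mp (abs_adiabaticEnergy_sub_wkbEnergy_le (u := u) (hP.pos x hx)
    (hP.abs_adiabaticParam_le_one x hx))
  have param_a := abs_le.mp (hP.abs_adiabaticParam_le_one a ha)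
  have param_x := abs_le.mp (hP.abs_adiabaticParam_le_one x hx)
  have energy_le : Real.exp (-1) * (wkbEnergy P u x / 2)
      ≤ Real.exp 1 * (3 / 2 * wkbEnergy P u a) := calc
    _ ≤ Real.exp (adiabaticParam P x) * adiabaticEnergy P u x := by
      gcongr <;> linarith
    _ ≤ Real.exp (adiabaticParam P a) * adiabaticEnergy P u a := energy_anti
    _ ≤ _ := by
      gcongr <;> linarith
  calc wkbEnergy P u x = 2 * Real.exp 1 * (Real.exp (-1) * (wkbEnergy P u x / 2)) := by
        rw [Real.exp_neg]; field_simp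
    _ ≤ 2 * Real.exp 1 * (Real.exp 1 * (3 / 2 * wkbEnergy P u a)) := by gcongr
    _ = 3 * Real.exp 2 * wkbEnergy P u a := by
        rw [show (2 : ℝ) = 1 + 1 by norm_num, Real.exp_add]; ring

end WKB

/-! ### Uniform Airy-type bounds for the edge equation -/

/-- The potential `x + s² x² / 4 - s / 2` of Weber's equation, centred and scaled at its right
turning point; at `s = 0` it is the Airy potential, and `ψ_n` corresponds to `s = n^{-1/3}`. -/
noncomputable def edgePotential (s x : ℝ) : ℝ :=
  x + s ^ 2 * x ^ 2 / 4 - s / 2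

/-- The growth rates of the Airy function and its first two derivatives as `x → -∞`, imposed on
`u` at `x`; they are stated for fourth powers so that no fractional exponents occur. -/
def HasAiryBounds (K : ℝ) (u : ℝ → ℝ) (x : ℝ) : Prop :=
  u x ^ 4 * max |x| 1 ≤ K ∧
  deriv u x ^ 4 ≤ K * max |x| 1 ∧
  deriv (deriv u) x ^ 4 ≤ K * max |x| 1 ^ 3

lemma HasAiryBounds.mono {K K' : ℝ} {u : ℝ → ℝ} {x : ℝ} (h : HasAiryBounds K u x)
    (hK : K ≤ K') : HasAiryBounds K' u x := by
  obtain ⟨h₀, h₁, h₂⟩ := h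
  exact ⟨h₀.trans hK, h₁.trans (by gcongr), h₂.trans (by gcongr)⟩

section Edge

variable {s a x L : ℝ} {u : ℝ → ℝ}

lemma hasDerivAt_neg_edgePotential (s x : ℝ) :
    HasDerivAt (-edgePotential s) (-(1 + s ^ 2 * x / 2)) x := by
  refine (((hasDerivAt_id' x).add (((hasDerivAt_pow 2 x).const_mul (s ^ 2)).div_const 4)).sub_const
    (s / 2)).neg.congr_deriv ?_
  ring

lemma deriv_neg_edgePotential (s : ℝ) :
    deriv (-edgePotential s) = fun x => -(1 + s ^ 2 * x / 2) :=
  funext fun x => (hasDerivAt_neg_edgePotential s x).deriv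

lemma hasDerivAt_deriv_neg_edgePotential (s x : ℝ) :
    HasDerivAt (deriv (-edgePotential s)) (-(s ^ 2 / 2)) x := by
  rw [deriv_neg_edgePotential]
  refine ((((hasDerivAt_id' x).const_mul (s ^ 2)).div_const 2).const_add 1).neg.congr_deriv ?_
  rw [mul_one]

lemma neg_div_two_le_neg_edgePotential (hs : 0 ≤ s) (hsx : -2 ≤ s ^ 2 * x) (hx : x ≤ 0) :
    -x / 2 ≤ -edgePotential s x := by
  rw [edgePotential]
  nlinarith

lemma neg_edgePotential_le (hs : s ≤ 1) (hx : x ≤ -1) : -edgePotential s x ≤ 2 * -x := by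
  rw [edgePotential]
  nlinarith [mul_nonneg (sq_nonneg s) (sq_nonneg x)]

lemma abs_one_add_edgePotential_le (hs : 0 ≤ s) (hs1 : s ≤ 1) (hx : x ∈ Icc (-2) 2) :
    |1 + edgePotential s x| ≤ 5 := by
  have square_le : s ^ 2 * x ^ 2 ≤ 1 * 4 := by
    gcongr
    · exact pow_le_one₀ hs hs1
    · nlinarith [hx.1, hx.2]
  rw [edgePotential, abs_le]
  constructor <;> linarith [hx.1, hx.2, mul_nonneg (sq_nonneg s) (sq_nonneg x)]

lemma one_le_edgePotential (hs : s ≤ 1) (hx : 2 ≤ x) : 1 ≤ edgePotential s x := by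
  rw [edgePotential]
  linarith [mul_nonneg (sq_nonneg s) (sq_nonneg x)]

lemma edgePotential_le_sq (hs : 0 ≤ s) (hs1 : s ≤ 1) (hx : 2 ≤ x) :
    edgePotential s x ≤ x ^ 2 := by
  rw [edgePotential]
  nlinarith [mul_le_of_le_one_left (sq_nonneg x) (pow_le_one₀ hs hs1 : s ^ 2 ≤ 1)]

lemma isAdiabaticOn_neg_edgePotential (hs : 0 ≤ s) (hsa : -2 ≤ s ^ 2 * a) :
    IsAdiabaticOn (-edgePotential s) (Icc a (-2)) := by
  have slope_bounds : ∀ y ∈ Icc a (-2), -2 ≤ s ^ 2 * y ∧ s ^ 2 * y ≤ 0 := fun y hy =>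
    ⟨hsa.trans (mul_le_mul_of_nonneg_left hy.1 (sq_nonneg s)),
      mul_nonpos_of_nonneg_of_nonpos (sq_nonneg s) (by linarith [hy.2])⟩
  have one_le : ∀ y ∈ Icc a (-2), 1 ≤ -edgePotential s y := fun y hy => by
    have := neg_div_two_le_neg_edgePotential hs (slope_bounds y hy).1 (by linarith [hy.2])
    linarith [hy.2]
  refine ⟨fun y hy => one_pos.trans_le (one_le y hy),
    fun y _ => (hasDerivAt_neg_edgePotential s y).differentiableAt,
    fun y _ => (hasDerivAt_deriv_neg_edgePotential s y).differentiableAt,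
    fun y _ => ?_, fun y hy => ?_⟩
  · rw [(hasDerivAt_deriv_neg_edgePotential s y).deriv]
    exact neg_nonpos.mpr (by positivity)
  · have cube_ge : 1 ≤ √(-edgePotential s y) ^ 3 :=
      one_le_pow₀ (Real.one_le_sqrt.mpr (one_le y hy))
    have slope_le : |-(1 + s ^ 2 * y / 2)| ≤ 1 :=
      abs_le.mpr ⟨by linarith [slope_bounds y hy], by linarith [slope_bounds y hy]⟩
    rw [adiabaticParam, deriv_neg_edgePotential, Pi.neg_apply, abs_div,
      abs_of_pos (by positivity : 0 < 2 * √(-edgePotential s y) ^ 3)]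
    exact div_le_one_of_le₀ (by linarith) (by positivity)

lemma hasAiryBounds_of_wkbEnergy_le (hs : 0 ≤ s) (hs1 : s ≤ 1) (hsx : -2 ≤ s ^ 2 * x)
    (hx : x ≤ -2) (hu : deriv (deriv u) x = edgePotential s x * u x)
    (hE : wkbEnergy (-edgePotential s) u x ≤ L) : HasAiryBounds (8 * L ^ 2) u x := by
  have lower := neg_div_two_le_neg_edgePotential hs hsx (by linarith)
  have upper := neg_edgePotential_le hs1 (by linarith : x ≤ -1)
  have frequency_sq := Real.sq_sqrt (by linarith : 0 ≤ -edgePotential s x)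
  have frequency_pos : 0 < √(-edgePotential s x) := Real.sqrt_pos.mpr (by linarith)
  rw [wkbEnergy, Pi.neg_apply] at hE
  set r := √(-edgePotential s x)
  have position_nonneg : 0 ≤ r * u x ^ 2 := by positivity
  have momentum_nonneg : 0 ≤ deriv u x ^ 2 / r := by positivity
  have position_le : r ^ 2 * u x ^ 4 ≤ L ^ 2 := by
    have := pow_le_pow_left₀ position_nonneg (by linarith : r * u x ^ 2 ≤ L) 2
    linarith
  have momentum_le : deriv u x ^ 4 ≤ L ^ 2 * r ^ 2 := by
    have := pow_le_pow_left₀ (sq_nonneg (deriv u x))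
      ((div_le_iff₀ frequency_pos).mp (by linarith : deriv u x ^ 2 / r ≤ L)) 2
    linarith
  have max_eq : max |x| 1 = -x := by
    rw [abs_of_nonpos (by linarith), max_eq_left (by linarith)]
  have neg_x_pos : 0 < -x := by linarith
  rw [HasAiryBounds, hu, max_eq]
  refine ⟨?_, ?_, ?_⟩
  · have : -x / 2 * u x ^ 4 ≤ r ^ 2 * u x ^ 4 := by gcongr; linarith
    linarith [sq_nonneg L]
  · have : L ^ 2 * r ^ 2 ≤ L ^ 2 * (2 * -x) := by gcongr; linarith
    linarith [mul_nonneg (sq_nonneg L) neg_x_pos.le]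
  · calc (edgePotential s x * u x) ^ 4 = (r ^ 2) ^ 3 * (r ^ 2 * u x ^ 4) := by
          rw [← neg_eq_iff_eq_neg.mpr frequency_sq]; ring
      _ ≤ (2 * -x) ^ 3 * L ^ 2 := by gcongr; linarith
      _ = 8 * L ^ 2 * (-x) ^ 3 := by ring

lemma hasAiryBounds_of_sq_add_sq_le (hs : 0 ≤ s) (hs1 : s ≤ 1) (hx : x ∈ Icc (-2) 2)
    (hu : deriv (deriv u) x = edgePotential s x * u x)
    (hE : u x ^ 2 + deriv u x ^ 2 ≤ L) : HasAiryBounds (1296 * L ^ 2) u x := by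
  have position_le : u x ^ 4 ≤ L ^ 2 := by
    have := pow_le_pow_left₀ (sq_nonneg (u x))
      (by linarith [sq_nonneg (deriv u x)] : u x ^ 2 ≤ L) 2
    linarith
  have momentum_le : deriv u x ^ 4 ≤ L ^ 2 := by
    have := pow_le_pow_left₀ (sq_nonneg (deriv u x))
      (by linarith [sq_nonneg (u x)] : deriv u x ^ 2 ≤ L) 2
    linarith
  have potential_le : edgePotential s x ^ 4 ≤ 6 ^ 4 := by
    rw [← Even.pow_abs (by decide : Even 4)]
    have := abs_le.mp (abs_one_add_edgePotential_le hs hs1 hx)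
    exact pow_le_pow_left₀ (abs_nonneg _) (abs_le.mpr ⟨by linarith, by linarith⟩) 4
  have one_le_max : 1 ≤ max |x| 1 := le_max_right _ _
  have max_le_two : max |x| 1 ≤ 2 := max_le (abs_le.mpr hx) one_le_two
  rw [HasAiryBounds, hu]
  refine ⟨?_, ?_, ?_⟩
  · calc u x ^ 4 * max |x| 1 ≤ L ^ 2 * 2 := by gcongr
      _ ≤ 1296 * L ^ 2 := by linarith [sq_nonneg L]
  · calc deriv u x ^ 4 ≤ 1296 * L ^ 2 := by linarith [sq_nonneg L]
      _ ≤ 1296 * L ^ 2 * max |x| 1 := le_mul_of_one_le_right (by positivity) one_le_max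
  · calc (edgePotential s x * u x) ^ 4 = edgePotential s x ^ 4 * u x ^ 4 := mul_pow ..
      _ ≤ 6 ^ 4 * L ^ 2 := by gcongr
      _ = 1296 * L ^ 2 := by norm_num
      _ ≤ 1296 * L ^ 2 * max |x| 1 ^ 3 :=
        le_mul_of_one_le_right (by positivity) (one_le_pow₀ one_le_max)

lemma div_two_pow_four_le_exp (hx : 0 ≤ x) : (x / 2) ^ 4 ≤ Real.exp (2 * (x - 2)) := calc
  (x / 2) ^ 4 ≤ Real.exp ((x - 2) / 2) ^ 4 := by
    gcongr
    linarith [Real.add_one_le_exp ((x - 2) / 2)]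
  _ = Real.exp (2 * (x - 2)) := by
    rw [← Real.exp_nat_mul]
    congr 1
    push_cast
    ring

lemma sq_mul_pow_four_le_of_tendsto_zero (hs1 : s ≤ 1)
    (hu : IsSchrodingerSolutionOn (edgePotential s) u (Ici 2)) (hlim : Tendsto u atTop (nhds 0))
    (hlim' : Tendsto (deriv u) atTop (nhds 0)) (hx : 2 ≤ x) :
    u x ^ 2 * x ^ 4 ≤ 16 * u 2 ^ 2 := by
  have one_le : ∀ y ∈ Ici 2, 1 ^ 2 ≤ edgePotential s y := fun y hy => by
    simpa using one_le_edgePotential hs1 hy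
  calc
    u x ^ 2 * x ^ 4 = 16 * (u x ^ 2 * (x / 2) ^ 4) := by ring
    _ ≤ 16 * (Real.exp (-(2 * 1 * (x - 2))) * u 2 ^ 2 * Real.exp (2 * (x - 2))) := by
      gcongr
      · exact hu.sq_le_exp_neg_mul_sq hlim hlim' zero_le_one one_le hx
      · exact div_two_pow_four_le_exp (zero_le_two.trans hx)
    _ = 16 * u 2 ^ 2 := by rw [mul_right_comm, ← Real.exp_add]; simp

lemma hasAiryBounds_of_tendsto_zero (hs : 0 ≤ s) (hs1 : s ≤ 1)
    (hu : IsSchrodingerSolutionOn (edgePotential s) u (Ici 2)) (hlim : Tendsto u atTop (nhds 0))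
    (hlim' : Tendsto (deriv u) atTop (nhds 0)) (hx : 2 ≤ x)
    (hE : u 2 ^ 2 + deriv u 2 ^ 2 ≤ L) : HasAiryBounds (256 * L ^ 2) u x := by
  have decay : u x ^ 2 * x ^ 4 ≤ 16 * L :=
    (sq_mul_pow_four_le_of_tendsto_zero hs1 hu hlim hlim' hx).trans
      (by linarith [sq_nonneg (deriv u 2)])
  have position_le : u x ^ 4 * x ^ 8 ≤ 256 * L ^ 2 := by
    have := pow_le_pow_left₀ (by positivity) decay 2
    linarith
  have momentum_le : deriv u x ^ 4 ≤ L ^ 2 := by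
    have := hu.antitoneOn_deriv_sq hlim hlim'
      (fun y hy => zero_le_one.trans (one_le_edgePotential hs1 hy)) self_mem_Ici
      (mem_Ici.mpr hx) hx
    have := pow_le_pow_left₀ (sq_nonneg (deriv u x))
      (this.trans (by linarith [sq_nonneg (u 2)] : deriv u 2 ^ 2 ≤ L)) 2
    linarith
  have one_le_x : 1 ≤ x := by linarith
  have max_eq : max |x| 1 = x := by rw [abs_of_nonneg (by linarith), max_eq_left one_le_x]
  rw [HasAiryBounds, hu.deriv_deriv (mem_Ici.mpr hx), max_eq]
  refine ⟨?_, ?_, ?_⟩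
  · calc u x ^ 4 * x ≤ u x ^ 4 * x ^ 8 := by gcongr; exact le_self_pow₀ one_le_x (by norm_num)
      _ ≤ 256 * L ^ 2 := position_le
  · calc deriv u x ^ 4 ≤ 256 * L ^ 2 := by linarith [sq_nonneg L]
      _ ≤ 256 * L ^ 2 * x := le_mul_of_one_le_right (by positivity) one_le_x
  · calc (edgePotential s x * u x) ^ 4 = edgePotential s x ^ 4 * u x ^ 4 := mul_pow ..
      _ ≤ (x ^ 2) ^ 4 * u x ^ 4 := by
        gcongr
        · linarith [one_le_edgePotential hs1 hx]
        · exact edgePotential_le_sq hs hs1 hx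
      _ = u x ^ 4 * x ^ 8 := by ring
      _ ≤ 256 * L ^ 2 := position_le
      _ ≤ 256 * L ^ 2 * x ^ 3 := le_mul_of_one_le_right (by positivity) (one_le_pow₀ one_le_x)

lemma sq_add_sq_le_two_mul_wkbEnergy (hs : 0 ≤ s) (hs1 : s ≤ 1) :
    u (-2) ^ 2 + deriv u (-2) ^ 2 ≤ 2 * wkbEnergy (-edgePotential s) u (-2) := by
  have lower : 1 ≤ √(-edgePotential s (-2)) := by
    refine Real.one_le_sqrt.mpr (le_trans (by norm_num) (neg_div_two_le_neg_edgePotential hs ?_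
      (by norm_num)))
    linarith [pow_le_one₀ (n := 2) hs hs1]
  have upper : √(-edgePotential s (-2)) ≤ 2 :=
    Real.sqrt_le_iff.mpr ⟨zero_le_two,
      (neg_edgePotential_le hs1 (by norm_num)).trans (by norm_num)⟩
  rw [wkbEnergy, Pi.neg_apply]
  set r := √(-edgePotential s (-2))
  have position_le : u (-2) ^ 2 ≤ 2 * (r * u (-2) ^ 2) := by
    nlinarith [mul_le_mul_of_nonneg_right lower (sq_nonneg (u (-2)))]
  have momentum_le : deriv u (-2) ^ 2 ≤ 2 * (deriv u (-2) ^ 2 / r) := by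
    rw [mul_div_assoc', le_div_iff₀ (by linarith), mul_comm]
    gcongr
  linarith

lemma wkbEnergy_neg_edgePotential_le (hs : 0 ≤ s) (hsa : -2 ≤ s ^ 2 * a)
    (hu : IsSchrodingerSolutionOn (edgePotential s) u (Icc a (-2))) (hx : x ∈ Icc a (-2)) :
    wkbEnergy (-edgePotential s) u x ≤ 3 * Real.exp 2 * wkbEnergy (-edgePotential s) u a :=
  (isAdiabaticOn_neg_edgePotential hs hsa).wkbEnergy_le (by rwa [neg_neg]) hx

lemma sq_add_sq_le_wkbEnergy_neg_two (hs : 0 ≤ s) (hs1 : s ≤ 1)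
    (hu : IsSchrodingerSolutionOn (edgePotential s) u (Icc (-2) 2)) (hx : x ∈ Icc (-2) 2) :
    u x ^ 2 + deriv u x ^ 2 ≤ 2 * Real.exp 20 * wkbEnergy (-edgePotential s) u (-2) := calc
  u x ^ 2 + deriv u x ^ 2 ≤ (u (-2) ^ 2 + deriv u (-2) ^ 2) * Real.exp (5 * (x - -2)) :=
    hu.sq_add_sq_le (fun y hy => abs_one_add_edgePotential_le hs hs1 hy) hx
  _ ≤ (u (-2) ^ 2 + deriv u (-2) ^ 2) * Real.exp 20 := by
    gcongr
    linarith [hx.2]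
  _ ≤ 2 * wkbEnergy (-edgePotential s) u (-2) * Real.exp 20 := by
    gcongr
    exact sq_add_sq_le_two_mul_wkbEnergy hs hs1
  _ = 2 * Real.exp 20 * wkbEnergy (-edgePotential s) u (-2) := mul_right_comm ..

theorem hasAiryBounds_of_wkbEnergy_left_le (hs : 0 ≤ s) (hs1 : s ≤ 1) (ha : a ≤ -2)
    (hsa : -2 ≤ s ^ 2 * a) (hu : IsSchrodingerSolutionOn (edgePotential s) u (Ici a))
    (hlim : Tendsto u atTop (nhds 0)) (hlim' : Tendsto (deriv u) atTop (nhds 0))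
    (hE : wkbEnergy (-edgePotential s) u a ≤ L) (hx : x ∈ Ici a) :
    HasAiryBounds (1296 * (6 * Real.exp 22 * L) ^ 2) u x := by
  have wkb_le : ∀ y ∈ Icc a (-2), wkbEnergy (-edgePotential s) u y ≤ 3 * Real.exp 2 * L :=
    fun y hy => (wkbEnergy_neg_edgePotential_le hs hsa (hu.mono Icc_subset_Ici_self) hy).trans
      (by gcongr)
  have transition_le : ∀ y ∈ Icc (-2) 2, u y ^ 2 + deriv u y ^ 2 ≤ 6 * Real.exp 22 * L :=
    fun y hy => calc
      _ ≤ 2 * Real.exp 20 * wkbEnergy (-edgePotential s) u (-2) :=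
        sq_add_sq_le_wkbEnergy_neg_two hs hs1
          (hu.mono (Icc_subset_Ici_self.trans (Ici_subset_Ici.mpr ha))) hy
      _ ≤ 2 * Real.exp 20 * (3 * Real.exp 2 * L) := by
        gcongr
        exact wkb_le (-2) (right_mem_Icc.mpr ha)
      _ = 6 * Real.exp 22 * L := by
        rw [show (22 : ℝ) = 20 + 2 by norm_num, Real.exp_add]; ring
  rcases le_total x (-2) with hx_osc | hx_osc
  · have hsx : -2 ≤ s ^ 2 * x := hsa.trans (mul_le_mul_of_nonneg_left hx (sq_nonneg s))
    refine (hasAiryBounds_of_wkbEnergy_le hs hs1 hsx hx_osc (hu.deriv_deriv hx)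
      (wkb_le x ⟨hx, hx_osc⟩)).mono ?_
    have : Real.exp 2 ^ 2 ≤ Real.exp 22 ^ 2 := by gcongr; norm_num
    nlinarith [mul_le_mul_of_nonneg_right this (sq_nonneg L)]
  rcases le_total x 2 with hx_trans | hx_decay
  · exact hasAiryBounds_of_sq_add_sq_le hs hs1 ⟨hx_osc, hx_trans⟩ (hu.deriv_deriv hx)
      (transition_le x ⟨hx_osc, hx_trans⟩)
  · refine (hasAiryBounds_of_tendsto_zero hs hs1 (hu.mono (Ici_subset_Ici.mpr (by linarith)))
      hlim hlim' hx_decay (transition_le 2 ⟨by norm_num, le_rfl⟩)).mono ?_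
    gcongr
    norm_num

end Edge

/-! ### Hermite functions -/

open Polynomial in
lemma derivative_hermite_succ (n : ℕ) :
    derivative (hermite (n + 1)) = ((n : ℤ[X]) + 1) * hermite n := by
  induction n with
  | zero => simp
  | succ n ih =>
    rw [hermite_succ (n + 1), derivative_sub, derivative_mul, ih, hermite_succ n]
    simp only [derivative_X, derivative_mul, derivative_add, derivative_natCast, derivative_one]
    push_cast
    ring

open Polynomial in
lemma derivative_derivative_hermite (n : ℕ) :
    derivative (derivative (hermite n)) = X * derivative (hermite n) - (n : ℤ[X]) * hermite n := by
  have lowering := derivative_hermite_succ n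
  rw [hermite_succ] at lowering
  simp only [derivative_sub, derivative_mul, derivative_X] at lowering
  linear_combination -lowering

lemma hermiteP_eq_aeval_hermite (n : ℕ) (x : ℝ) :
    hermiteP n x = Polynomial.aeval x (Polynomial.hermite n) := by
  have gaussian_eq : (fun t : ℝ => Real.exp (-t ^ 2 / 2)) = fun t => Real.exp (-(t ^ 2 / 2)) := by
    simp only [neg_div]
  rw [Polynomial.hermite_eq_deriv_gaussian', hermiteP, iteratedDeriv_eq_iterate, gaussian_eq]
  ring

lemma eval_zero_hermite_add_two (n : ℕ) :
    (Polynomial.hermite (n + 2)).eval 0 = -((n : ℤ) + 1) * (Polynomial.hermite n).eval 0 := by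
  rw [Polynomial.hermite_succ, derivative_hermite_succ]
  simp only [Polynomial.eval_sub, Polynomial.eval_mul, Polynomial.eval_X, Polynomial.eval_add,
    Polynomial.eval_natCast, Polynomial.eval_one]
  ring

lemma eval_zero_hermite_pow_four_mul_le (n : ℕ) :
    (Polynomial.hermite n).eval 0 ^ 4 * ((n : ℤ) + 1) ≤ (n.factorial : ℤ) ^ 2 := by
  induction n using Nat.twoStepInduction with
  | zero => simp
  | one => simp
  | more n ih _ =>
    rw [eval_zero_hermite_add_two, Nat.factorial_succ, Nat.factorial_succ]
    push_cast
    set h := (Polynomial.hermite n).eval 0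
    set f := (n.factorial : ℤ)
    calc (-((n : ℤ) + 1) * h) ^ 4 * ((n : ℤ) + 2 + 1)
        = h ^ 4 * (n + 1) * ((n + 1) ^ 2 * ((n + 1) * (n + 3))) := by ring
      _ ≤ f ^ 2 * ((n + 1) ^ 2 * (n + 2) ^ 2) := by
        gcongr
        linarith [sq_nonneg (n : ℤ)]
      _ = ((n + 1 + 1) * ((n + 1) * f)) ^ 2 := by ring

lemma eval_zero_derivative_hermite_pow_four_le (n : ℕ) :
    (Polynomial.derivative (Polynomial.hermite n)).eval 0 ^ 4 ≤ n * (n.factorial : ℤ) ^ 2 := by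
  rcases n with _ | n
  · simp
  · rw [derivative_hermite_succ, Nat.factorial_succ]
    push_cast
    calc (((n : Polynomial ℤ) + 1) * Polynomial.hermite n).eval 0 ^ 4
        = (Polynomial.hermite n).eval 0 ^ 4 * (n + 1) * ((n : ℤ) + 1) ^ 3 := by
          simp only [Polynomial.eval_mul, Polynomial.eval_add, Polynomial.eval_natCast,
            Polynomial.eval_one]
          ring
      _ ≤ (n.factorial : ℤ) ^ 2 * ((n : ℤ) + 1) ^ 3 := by
        gcongr
        exact eval_zero_hermite_pow_four_mul_le n
      _ = ((n : ℤ) + 1) * ((n + 1) * n.factorial) ^ 2 := by ring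

section GaussianPolynomial

open Polynomial

/-- The polynomial `p` times the square root `e^{-x²/4}` of the Gaussian weight of the
probabilists' Hermite polynomials. -/
noncomputable def gaussianMul (p : ℝ[X]) (x : ℝ) : ℝ :=
  Real.exp (-x ^ 2 / 4) * p.eval x

/-- The operator on polynomials induced by differentiating `gaussianMul p`. -/
noncomputable def twistedDerivative (p : ℝ[X]) : ℝ[X] :=
  derivative p - C (1 / 2) * X * p

lemma hasDerivAt_gaussianMul (p : ℝ[X]) (x : ℝ) :
    HasDerivAt (gaussianMul p) (gaussianMul (twistedDerivative p) x) x := by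
  refine (((hasDerivAt_pow 2 x).neg.div_const 4).exp.mul (p.hasDerivAt x)).congr_deriv ?_
  simp only [gaussianMul, twistedDerivative, Pi.neg_apply, eval_sub, eval_mul, eval_C, eval_X]
  ring

lemma deriv_gaussianMul (p : ℝ[X]) : deriv (gaussianMul p) = gaussianMul (twistedDerivative p) :=
  funext fun x => (hasDerivAt_gaussianMul p x).deriv

lemma tendsto_gaussianMul_atTop (p : ℝ[X]) : Tendsto (gaussianMul p) atTop (nhds 0) := by
  have dominating := p.tendsto_div_exp_atTop.abs.const_mul (Real.exp 1)
  rw [abs_zero, mul_zero] at dominating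
  refine squeeze_zero_norm (fun x => ?_) dominating
  have gaussian_le : Real.exp (-x ^ 2 / 4) ≤ Real.exp 1 / Real.exp x := by
    rw [← Real.exp_sub]
    exact Real.exp_le_exp.mpr (by linarith [sq_nonneg (x / 2 - 1)])
  calc ‖gaussianMul p x‖ = Real.exp (-x ^ 2 / 4) * |p.eval x| := by
        rw [gaussianMul, Real.norm_eq_abs, abs_mul, Real.abs_exp]
    _ ≤ Real.exp 1 / Real.exp x * |p.eval x| := by gcongr
    _ = Real.exp 1 * |p.eval x / Real.exp x| := by
        rw [abs_div, Real.abs_exp, div_mul_eq_mul_div, mul_div_assoc]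

lemma twistedDerivative_twistedDerivative_hermite (n : ℕ) :
    twistedDerivative (twistedDerivative ((hermite n).map (Int.castRingHom ℝ)))
      = (C (1 / 4) * X ^ 2 - C ((n : ℝ) + 1 / 2)) * (hermite n).map (Int.castRingHom ℝ) := by
  have ode := congrArg (Polynomial.map (Int.castRingHom ℝ)) (derivative_derivative_hermite n)
  simp only [Polynomial.map_sub, Polynomial.map_mul, Polynomial.map_X, Polynomial.map_natCast,
    ← derivative_map] at ode
  set H := (hermite n).map (Int.castRingHom ℝ)
  have half_add_half : C (1 / 2 : ℝ) + C (1 / 2) = 1 := by rw [← C_add]; norm_num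
  have half_mul_half : C (1 / 2 : ℝ) * C (1 / 2) = C (1 / 4) := by rw [← C_mul]; norm_num
  have natCast_add_half : C ((n : ℝ) + 1 / 2) = (n : ℝ[X]) + C (1 / 2) := by
    rw [C_add, C_eq_natCast]
  simp only [twistedDerivative, derivative_sub, derivative_mul, derivative_C, derivative_X]
  rw [natCast_add_half]
  linear_combination ode - X * derivative H * half_add_half + X ^ 2 * H * half_mul_half

end GaussianPolynomial

/-! ### The oscillator functions -/

/-- The normalization constant of the oscillator function `φ_m`. -/
noncomputable def oscNormalization (m : ℕ) : ℝ :=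
  (2 * Real.pi) ^ (-(1 : ℝ) / 4) * (m.factorial : ℝ) ^ (-(1 : ℝ) / 2)

section Oscillator

open Polynomial

variable (m : ℕ)

lemma osc_eq_gaussianMul :
    osc m = fun x => oscNormalization m * gaussianMul ((hermite m).map (Int.castRingHom ℝ)) x := by
  ext x
  rw [osc, hermiteP_eq_aeval_hermite, gaussianMul, oscNormalization, mul_assoc,
    ← algebraMap_int_eq, eval_map_algebraMap]

lemma deriv_osc_eq_gaussianMul :
    deriv (osc m) = fun x => oscNormalization m *
      gaussianMul (twistedDerivative ((hermite m).map (Int.castRingHom ℝ))) x := by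
  rw [osc_eq_gaussianMul, ← deriv_gaussianMul]
  exact funext fun x => deriv_const_mul_field _

lemma isSchrodingerSolutionOn_osc :
    IsSchrodingerSolutionOn (fun x => x ^ 2 / 4 - m - 1 / 2) (osc m) univ where
  differentiableAt x _ := by
    rw [osc_eq_gaussianMul]
    exact (hasDerivAt_gaussianMul _ x).differentiableAt.const_mul _
  hasDerivAt_deriv x _ := by
    rw [deriv_osc_eq_gaussianMul, osc_eq_gaussianMul]
    refine ((hasDerivAt_gaussianMul _ x).const_mul _).congr_deriv ?_
    rw [twistedDerivative_twistedDerivative_hermite]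
    simp only [gaussianMul, eval_mul, eval_sub, eval_C, eval_pow, eval_X]
    ring

lemma tendsto_osc_atTop : Tendsto (osc m) atTop (nhds 0) := by
  rw [osc_eq_gaussianMul]
  simpa using (tendsto_gaussianMul_atTop _).const_mul (oscNormalization m)

lemma tendsto_deriv_osc_atTop : Tendsto (deriv (osc m)) atTop (nhds 0) := by
  rw [deriv_osc_eq_gaussianMul]
  simpa using (tendsto_gaussianMul_atTop _).const_mul (oscNormalization m)

lemma oscNormalization_pow_four_mul_le_one :
    oscNormalization m ^ 4 * (m.factorial : ℝ) ^ 2 ≤ 1 := by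
  have factorial_cancel : ((m.factorial : ℝ) ^ (-(1 : ℝ) / 2)) ^ 4 * (m.factorial : ℝ) ^ 2 = 1 := by
    have inv_square : -(1 : ℝ) / 2 * (4 : ℕ) = -(2 : ℕ) := by norm_num
    rw [← Real.rpow_mul_natCast (by positivity), inv_square, Real.rpow_neg (by positivity),
      Real.rpow_natCast]
    exact inv_mul_cancel₀ (by positivity)
  have pi_factor : ((2 * Real.pi) ^ (-(1 : ℝ) / 4)) ^ 4 ≤ 1 :=
    pow_le_one₀ (by positivity) (Real.rpow_le_one_of_one_le_of_nonpos
      (by linarith [Real.pi_gt_three]) (by norm_num))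
  rwa [oscNormalization, mul_pow, mul_assoc, factorial_cancel, mul_one]

lemma osc_apply_zero : osc m 0 = oscNormalization m * ((hermite m).eval 0 : ℤ) := by
  simp [osc_eq_gaussianMul, gaussianMul]

lemma deriv_osc_apply_zero :
    deriv (osc m) 0 = oscNormalization m * ((derivative (hermite m)).eval 0 : ℤ) := by
  simp [deriv_osc_eq_gaussianMul, gaussianMul, twistedDerivative]

lemma osc_zero_pow_four_mul_le_one : osc m 0 ^ 4 * m ≤ 1 := by
  have hermite_le : (((hermite m).eval 0 : ℤ) : ℝ) ^ 4 * ((m : ℝ) + 1) ≤ (m.factorial : ℝ) ^ 2 := by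
    exact_mod_cast eval_zero_hermite_pow_four_mul_le m
  calc osc m 0 ^ 4 * m = oscNormalization m ^ 4 * ((((hermite m).eval 0 : ℤ) : ℝ) ^ 4 * m) := by
        rw [osc_apply_zero]; ring
    _ ≤ oscNormalization m ^ 4 * (m.factorial : ℝ) ^ 2 := by
        gcongr
        refine le_trans ?_ hermite_le
        gcongr
        linarith
    _ ≤ 1 := oscNormalization_pow_four_mul_le_one m

lemma deriv_osc_zero_pow_four_le : deriv (osc m) 0 ^ 4 ≤ m := by
  have hermite_le :
      (((derivative (hermite m)).eval 0 : ℤ) : ℝ) ^ 4 ≤ m * (m.factorial : ℝ) ^ 2 := by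
    exact_mod_cast eval_zero_derivative_hermite_pow_four_le m
  calc deriv (osc m) 0 ^ 4
      = oscNormalization m ^ 4 * (((derivative (hermite m)).eval 0 : ℤ) : ℝ) ^ 4 := by
        rw [deriv_osc_apply_zero]; ring
    _ ≤ oscNormalization m ^ 4 * (m * (m.factorial : ℝ) ^ 2) := by gcongr
    _ = m * (oscNormalization m ^ 4 * (m.factorial : ℝ) ^ 2) := mul_left_comm ..
    _ ≤ m := mul_le_of_le_one_right (by positivity) (oscNormalization_pow_four_mul_le_one m)

end Oscillator

/-! ### Rescaling to the edge -/

lemma deriv_const_mul_comp_affine (u : ℝ → ℝ) (c d k : ℝ) :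
    deriv (fun x => c * u (d + k * x)) = fun x => c * k * deriv u (d + k * x) := by
  ext x
  rw [deriv_const_mul_field, deriv_comp_mul_left k (fun y => u (d + y)), deriv_comp_const_add,
    smul_eq_mul, mul_assoc]

lemma IsSchrodingerSolutionOn.const_mul_comp_affine {q u : ℝ → ℝ}
    (h : IsSchrodingerSolutionOn q u univ) (c d k : ℝ) :
    IsSchrodingerSolutionOn (fun x => k ^ 2 * q (d + k * x)) (fun x => c * u (d + k * x)) univ := by
  have affine_deriv (x : ℝ) : HasDerivAt (fun x => d + k * x) k x := by
    simpa using ((hasDerivAt_id' x).const_mul k).const_add d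
  refine ⟨fun x _ => ?_, fun x _ => ?_⟩
  · exact (((h.hasDerivAt (mem_univ _)).comp x (affine_deriv x)).const_mul c).differentiableAt
  · rw [deriv_const_mul_comp_affine]
    refine (((h.hasDerivAt_deriv _ (mem_univ _)).comp x (affine_deriv x)).const_mul
      (c * k)).congr_deriv ?_
    ring

section PsiN

variable {n : ℕ} {b x : ℝ}

-- Every power of `n` entering `ψ_n` is an integral power of `b = n^{1/12}`.

lemma psiN_eq_const_mul_comp_affine (hb : 0 < b) (hn : (n : ℝ) = b ^ 12) :
    psiN n = fun x => b * osc n (2 * b ^ 6 + (b ^ 2)⁻¹ * x) := by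
  have scale : (n : ℝ) ^ ((1 : ℝ) / 12) = b := by
    rw [hn, ← Real.rpow_natCast_mul hb.le]; norm_num
  have sqrt_eq : √(n : ℝ) = b ^ 6 := by
    rw [hn, show b ^ 12 = (b ^ 6) ^ 2 by ring, Real.sqrt_sq (by positivity)]
  have slope : (n : ℝ) ^ (-(1 : ℝ) / 6) = (b ^ 2)⁻¹ := by
    rw [hn, ← Real.rpow_natCast_mul hb.le, ← Real.rpow_natCast, ← Real.rpow_neg hb.le]; norm_num
  ext x
  rw [psiN, psiUp, scale, sqrt_eq, slope]

lemma deriv_psiN (hb : 0 < b) (hn : (n : ℝ) = b ^ 12) :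
    deriv (psiN n) = fun x => b⁻¹ * deriv (osc n) (2 * b ^ 6 + (b ^ 2)⁻¹ * x) := by
  rw [psiN_eq_const_mul_comp_affine hb hn, deriv_const_mul_comp_affine]
  have : b * (b ^ 2)⁻¹ = b⁻¹ := by field_simp
  rw [this]

lemma isSchrodingerSolutionOn_psiN (hb : 0 < b) (hn : (n : ℝ) = b ^ 12) :
    IsSchrodingerSolutionOn (edgePotential (b ^ 4)⁻¹) (psiN n) univ := by
  have potential_eq : edgePotential (b ^ 4)⁻¹ = fun x =>
      (b ^ 2)⁻¹ ^ 2 * ((2 * b ^ 6 + (b ^ 2)⁻¹ * x) ^ 2 / 4 - n - 1 / 2) := by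
    ext x
    rw [edgePotential, hn]
    field_simp
    ring
  rw [potential_eq, psiN_eq_const_mul_comp_affine hb hn]
  exact (isSchrodingerSolutionOn_osc n).const_mul_comp_affine b (2 * b ^ 6) (b ^ 2)⁻¹

lemma tendsto_const_add_const_mul_atTop (d : ℝ) {k : ℝ} (hk : 0 < k) :
    Tendsto (fun x : ℝ => d + k * x) atTop atTop :=
  tendsto_atTop_add_const_left _ _ (tendsto_id.const_mul_atTop hk)

lemma tendsto_psiN_atTop (hb : 0 < b) (hn : (n : ℝ) = b ^ 12) :
    Tendsto (psiN n) atTop (nhds 0) := by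
  rw [psiN_eq_const_mul_comp_affine hb hn]
  simpa using ((tendsto_osc_atTop n).comp
    (tendsto_const_add_const_mul_atTop (2 * b ^ 6) (by positivity : 0 < (b ^ 2)⁻¹))).const_mul b

lemma tendsto_deriv_psiN_atTop (hb : 0 < b) (hn : (n : ℝ) = b ^ 12) :
    Tendsto (deriv (psiN n)) atTop (nhds 0) := by
  rw [deriv_psiN hb hn]
  simpa using ((tendsto_deriv_osc_atTop n).comp
    (tendsto_const_add_const_mul_atTop (2 * b ^ 6) (by positivity : 0 < (b ^ 2)⁻¹))).const_mul b⁻¹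

lemma psiN_neg_two_mul_pow (hb : 0 < b) (hn : (n : ℝ) = b ^ 12) :
    psiN n (-(2 * b ^ 8)) = b * osc n 0 := by
  have argument_eq : 2 * b ^ 6 + (b ^ 2)⁻¹ * -(2 * b ^ 8) = 0 := by field_simp; ring
  simp only [psiN_eq_const_mul_comp_affine hb hn, argument_eq]

lemma deriv_psiN_neg_two_mul_pow (hb : 0 < b) (hn : (n : ℝ) = b ^ 12) :
    deriv (psiN n) (-(2 * b ^ 8)) = b⁻¹ * deriv (osc n) 0 := by
  have argument_eq : 2 * b ^ 6 + (b ^ 2)⁻¹ * -(2 * b ^ 8) = 0 := by field_simp; ring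
  simp only [deriv_psiN hb hn, argument_eq]

lemma psiN_neg_two_mul_pow_sq_mul_le_one (hb : 0 < b) (hn : (n : ℝ) = b ^ 12) :
    psiN n (-(2 * b ^ 8)) ^ 2 * b ^ 4 ≤ 1 := by
  rw [psiN_neg_two_mul_pow hb hn]
  refine (sq_le_one_iff₀ (by positivity)).mp ?_
  calc ((b * osc n 0) ^ 2 * b ^ 4) ^ 2 = osc n 0 ^ 4 * n := by rw [hn]; ring
    _ ≤ 1 := osc_zero_pow_four_mul_le_one n

lemma deriv_psiN_neg_two_mul_pow_sq_le (hb : 0 < b) (hn : (n : ℝ) = b ^ 12) :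
    deriv (psiN n) (-(2 * b ^ 8)) ^ 2 ≤ b ^ 4 := by
  rw [deriv_psiN_neg_two_mul_pow hb hn]
  refine le_of_sq_le_sq ?_ (by positivity)
  calc ((b⁻¹ * deriv (osc n) 0) ^ 2) ^ 2 = (b ^ 4)⁻¹ * deriv (osc n) 0 ^ 4 := by
        rw [← inv_pow]; ring
    _ ≤ (b ^ 4)⁻¹ * n := by gcongr; exact deriv_osc_zero_pow_four_le n
    _ = (b ^ 4) ^ 2 := by rw [hn]; field_simp

lemma wkbEnergy_psiN_le (hb : 1 ≤ b) (hn : (n : ℝ) = b ^ 12) :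
    wkbEnergy (-edgePotential (b ^ 4)⁻¹) (psiN n) (-(2 * b ^ 8)) ≤ 3 := by
  have b_pos : 0 < b := one_pos.trans_le hb
  have frequency_sq : (-edgePotential (b ^ 4)⁻¹) (-(2 * b ^ 8)) = b ^ 8 + (b ^ 4)⁻¹ / 2 := by
    rw [Pi.neg_apply, edgePotential]
    field_simp
    ring
  have frequency_ge : b ^ 4 ≤ √(b ^ 8 + (b ^ 4)⁻¹ / 2) :=
    Real.le_sqrt_of_sq_le (by rw [← pow_mul]; simp only [le_add_iff_nonneg_right]; positivity)
  have frequency_le : √(b ^ 8 + (b ^ 4)⁻¹ / 2) ≤ 2 * b ^ 4 := by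
    refine Real.sqrt_le_iff.mpr ⟨by positivity, ?_⟩
    have inv_le : (b ^ 4)⁻¹ ≤ 1 := inv_le_one_of_one_le₀ (one_le_pow₀ hb)
    have := one_le_pow₀ hb (n := 8)
    linarith
  have position_le := psiN_neg_two_mul_pow_sq_mul_le_one b_pos hn
  have momentum_le := deriv_psiN_neg_two_mul_pow_sq_le b_pos hn
  rw [wkbEnergy, frequency_sq]
  calc _ ≤ 2 * b ^ 4 * psiN n (-(2 * b ^ 8)) ^ 2 + b ^ 4 / b ^ 4 := by gcongr
    _ = 2 * (psiN n (-(2 * b ^ 8)) ^ 2 * b ^ 4) + 1 := by rw [div_self (by positivity)]; ring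
    _ ≤ 3 := by linarith

theorem hasAiryBounds_psiN (hn : 1 ≤ n) (hx : -(2 * (n : ℝ) ^ ((2 : ℝ) / 3)) ≤ x) :
    HasAiryBounds (1296 * (6 * Real.exp 22 * 3) ^ 2) (psiN n) x := by
  obtain ⟨b, hb, hnb⟩ : ∃ b : ℝ, 1 ≤ b ∧ (n : ℝ) = b ^ 12 :=
    ⟨(n : ℝ) ^ ((12 : ℕ) : ℝ)⁻¹, Real.one_le_rpow (by exact_mod_cast hn) (by positivity),
      (Real.rpow_inv_natCast_pow n.cast_nonneg (by norm_num)).symm⟩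
  have b_pos : 0 < b := one_pos.trans_le hb
  have left_end : (n : ℝ) ^ ((2 : ℝ) / 3) = b ^ 8 := by
    rw [hnb, ← Real.rpow_natCast_mul b_pos.le, ← Real.rpow_natCast]; norm_num
  rw [left_end] at hx
  refine hasAiryBounds_of_wkbEnergy_left_le (by positivity)
    (inv_le_one_of_one_le₀ (one_le_pow₀ hb)) ?_ ?_
    ((isSchrodingerSolutionOn_psiN b_pos hnb).mono (subset_univ _)) (tendsto_psiN_atTop b_pos hnb)
    (tendsto_deriv_psiN_atTop b_pos hnb) (wkbEnergy_psiN_le hb hnb) hx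
  · linarith [one_le_pow₀ hb (n := 8)]
  · have : (b ^ 4)⁻¹ ^ 2 * -(2 * b ^ 8) = -2 := by field_simp
    exact this.ge

end PsiN

lemma abs_le_rpow_of_pow_four_le {y B m k : ℝ} (hB : 0 ≤ B) (hm : 0 < m)
    (h : y ^ 4 ≤ B * m ^ k) : |y| ≤ B ^ ((1 : ℝ) / 4) * m ^ (k / 4) := by
  have fourth_power : (B ^ ((1 : ℝ) / 4) * m ^ (k / 4)) ^ 4 = B * m ^ k := by
    rw [mul_pow, ← Real.rpow_mul_natCast hB, ← Real.rpow_mul_natCast hm.le]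
    norm_num
  rw [← fourth_power, ← Even.pow_abs (by decide : Even 4) y] at h
  exact le_of_pow_le_pow_left₀ (by norm_num) (by positivity) h

/-- uniform polynomial bounds on `ψ_n` and its first two derivatives on
`[−2n^{2/3}, ∞)`. -/
theorem psiN_bounds :
    ∃ C : ℝ, 0 < C ∧ ∀ n : ℕ, 1 ≤ n → ∀ x : ℝ, -(2 * (n : ℝ) ^ ((2:ℝ)/3)) ≤ x →
      |psiN n x| ≤ C * (max |x| 1) ^ (-(1:ℝ)/4) ∧
      |deriv (psiN n) x| ≤ C * (max |x| 1) ^ ((1:ℝ)/4) ∧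
      |deriv (deriv (psiN n)) x| ≤ C * (max |x| 1) ^ ((3:ℝ)/4) := by
  set K : ℝ := 1296 * (6 * Real.exp 22 * 3) ^ 2
  have K_pos : 0 < K := by positivity
  refine ⟨K ^ ((1 : ℝ) / 4), by positivity, fun n hn x hx => ?_⟩
  obtain ⟨value, slope, curvature⟩ := hasAiryBounds_psiN hn hx
  have max_pos : 0 < max |x| 1 := one_pos.trans_le (le_max_right _ _)
  refine ⟨abs_le_rpow_of_pow_four_le K_pos.le max_pos ?_,
    abs_le_rpow_of_pow_four_le K_pos.le max_pos ?_,
    abs_le_rpow_of_pow_four_le K_pos.le max_pos ?_⟩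
  · rwa [Real.rpow_neg_one, ← div_eq_mul_inv, le_div_iff₀ max_pos]
  · rwa [Real.rpow_one]
  · exact_mod_cast curvature
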